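/- If a hierarchical clustering method H satisfies the Axiom of Value (A1) and the Axiom of Transformation (A2), then H satisfies the Property of Influence (P1): for every network (X, A_X) and every pair of distinct nodes x ≠ x', the output ultrametric satisfies u_X(x,x') ≥ mlc(X, A_X). -/

import Mathlib

noncomputable section

/-- A dissimilarity function on a node set: nonnegative and zero exactly on the diagonal.
It need not be symmetric nor satisfy the triangle inequality. -/
def IsDissim {X : Type} (A : X → X → ℝ) : Prop :=
  (∀ x x', 0 ≤ A x x') ∧ (∀ x x', A x x' = 0 ↔ x = x')

/-- A symmetric dissimilarity. -/
def IsSym {X : Type} (A : X → X → ℝ) : Prop := ∀ x x', A x x' = A x' x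

/-- An ultrametric: nonnegative, zero exactly on the diagonal, symmetric, and
satisfying the strong triangle inequality. -/
def IsUltrametric {X : Type} (u : X → X → ℝ) : Prop :=
  (∀ x x', 0 ≤ u x x') ∧ (∀ x x', u x x' = 0 ↔ x = x') ∧
    (∀ x x', u x x' = u x' x) ∧
    (∀ x x' x'', u x x'' ≤ max (u x x') (u x' x''))

/-- The cost of the chain `x :: l`: the maximum dissimilarity over consecutive links. -/
def chainCost {X : Type} (A : X → X → ℝ) : X → List X → ℝ
  | _, [] => 0
  | x, y :: l => max (A x y) (chainCost A y l)

/-- The set of costs of chains from `x` to `x'`. -/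
def chainCosts {X : Type} (A : X → X → ℝ) (x x' : X) : Set ℝ :=
  {c | ∃ l : List X, (x :: l).getLast (List.cons_ne_nil x l) = x' ∧ chainCost A x l = c}

/-- The directed minimum chain cost `ũ*_X(x,x')`: minimum cost over all chains from `x` to `x'`. -/
def minChainCost {X : Type} (A : X → X → ℝ) (x x' : X) : ℝ :=
  sInf (chainCosts A x x')

/-- The nonreciprocal ultrametric `u^NR`. -/
def nonrecipUltra {X : Type} (A : X → X → ℝ) (x x' : X) : ℝ :=
  max (minChainCost A x x') (minChainCost A x' x)

/-- The reciprocal ultrametric `u^R`. -/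
def recipUltra {X : Type} (A : X → X → ℝ) (x x' : X) : ℝ :=
  minChainCost (fun a b => max (A a b) (A b a)) x x'

/-- The unilateral ultrametric `u^U`. -/
def uniUltra {X : Type} (A : X → X → ℝ) (x x' : X) : ℝ :=
  minChainCost (fun a b => min (A a b) (A b a)) x x'

/-- The minimum loop cost `mlc(X, A_X)`: minimum cost over loops, i.e. chains from some
node `x` back to itself containing at least one node different from `x`. -/
def mlc {X : Type} (A : X → X → ℝ) : ℝ :=
  sInf {c | ∃ (x : X) (l : List X),
    (x :: l).getLast (List.cons_ne_nil x l) = x ∧ (∃ y ∈ l, y ≠ x) ∧ chainCost A x l = c}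

/-- The separation `sep(X, A_X)`: minimum dissimilarity over pairs of distinct nodes. -/
def sep {X : Type} (A : X → X → ℝ) : ℝ :=
  sInf {c | ∃ x x' : X, x ≠ x' ∧ A x x' = c}

/-- A hierarchical clustering method: assigns to every (finite) network an output
two-variable function on the same node set. -/
abbrev HCMethod := ∀ (X : Type) [Fintype X], (X → X → ℝ) → X → X → ℝ

/-- A hierarchical clustering method outputs an ultrametric on every network. -/
def IsHCMethod (H : HCMethod) : Prop :=
  ∀ (X : Type) [Fintype X] (A : X → X → ℝ), IsDissim A → IsUltrametric (H X A)

/-- `p, q` are the two (distinct) nodes of a two-node set. -/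
def TwoNode {X : Type} (p q : X) : Prop := p ≠ q ∧ ∀ x : X, x = p ∨ x = q

/-- Axiom of Value (A1): on every two-node network the output clusters the two nodes at
the maximum of the two dissimilarities. -/
def AxiomValue (H : HCMethod) : Prop :=
  ∀ (X : Type) [Fintype X] (p q : X), TwoNode p q →
    ∀ A : X → X → ℝ, IsDissim A → H X A p q = max (A p q) (A q p)

/-- Axiom of Transformation (A2): dissimilarity-reducing maps do not increase output values. -/
def AxiomTransform (H : HCMethod) : Prop :=
  ∀ (X Y : Type) [Fintype X] [Fintype Y] (AX : X → X → ℝ) (AY : Y → Y → ℝ),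
    IsDissim AX → IsDissim AY →
    ∀ φ : X → Y, (∀ x x', AY (φ x) (φ x') ≤ AX x x') →
    ∀ x x' : X, H Y AY (φ x) (φ x') ≤ H X AX x x'

/-- The canonical dissimilarity `A_{n,α,β}` on `Fin n`: `α` for `i > j`, `β` for `i < j`,
`0` on the diagonal. -/
def canonDissim (n : ℕ) (α β : ℝ) : Fin n → Fin n → ℝ :=
  fun i j => if i = j then 0 else if j < i then α else β

/-- Extended Axiom of Value (A1'): on every permuted canonical network `Δ_n(α,β,Π)` the
output ultrametric equals `max(α,β)` off the diagonal. -/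
def ExtAxiomValue (H : HCMethod) : Prop :=
  ∀ (n : ℕ) (α β : ℝ), 0 < α → 0 < β → ∀ π : Equiv.Perm (Fin n),
    ∀ i j : Fin n, i ≠ j →
      H (Fin n) (fun i j => canonDissim n α β (π i) (π j)) i j = max α β

/-- Alternative Axiom of Value (A1''): on every two-node network the output clusters the
two nodes at the minimum of the two dissimilarities. -/
def AltAxiomValue (H : HCMethod) : Prop :=
  ∀ (X : Type) [Fintype X] (p q : X), TwoNode p q →
    ∀ A : X → X → ℝ, IsDissim A → H X A p q = min (A p q) (A q p)

/-- Agnostic Axiom of Value (A1'''): on every two-node network the output value lies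
between the minimum and maximum of the two dissimilarities. -/
def AgnAxiomValue (H : HCMethod) : Prop :=
  ∀ (X : Type) [Fintype X] (p q : X), TwoNode p q →
    ∀ A : X → X → ℝ, IsDissim A →
      min (A p q) (A q p) ≤ H X A p q ∧ H X A p q ≤ max (A p q) (A q p)

/-!
Fix `δ > 0` and let `S` be the set of nodes that reach `x` through links cheaper than `δ`. Every
link from outside `S` into `S` costs at least `δ`, and every link from `S` outwards costs at least
`sep A > 0`, so collapsing `S` and its complement to points is a dissimilarity-reducing map onto the
two-node network `canonDissim 2 δ (sep A)`. By (A2) and (A1), the output between `x` and any node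
outside `S` is at least `δ`. For `δ = mlc A`, two distinct nodes cannot reach each other both ways,
as this would close a loop of cost less than `mlc A`.
-/

section Chains

variable {X : Type} {A : X → X → ℝ} {δ : ℝ}

theorem chainCost_nonneg (A : X → X → ℝ) : ∀ (x : X) (l : List X), 0 ≤ chainCost A x l
  | _, [] => le_rfl
  | _, y :: l => le_max_of_le_right (chainCost_nonneg A y l)

theorem chainCost_lt_iff (hδ : 0 < δ) :
    ∀ {x : X} {l : List X}, chainCost A x l < δ ↔ (x :: l).IsChain (A · · < δ)
  | _, [] => by simpa only [chainCost, List.isChain_singleton, iff_true] using hδ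
  | _, _ :: _ => by
    rw [chainCost, max_lt_iff, chainCost_lt_iff hδ, List.isChain_cons_cons]

theorem mlc_le_chainCost {x y : X} {l : List X}
    (hlast : (x :: l).getLast (List.cons_ne_nil x l) = x) (hy : y ∈ l) (hyx : y ≠ x) :
    mlc A ≤ chainCost A x l := by
  refine csInf_le ⟨0, ?_⟩ ⟨x, l, hlast, ⟨y, hy, hyx⟩, rfl⟩
  rintro _ ⟨z, k, -, -, rfl⟩
  exact chainCost_nonneg A z k

theorem mlc_lt_of_reflTransGen (hδ : 0 < δ) {x x' : X} (hne : x ≠ x')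
    (hto : Relation.ReflTransGen (A · · < δ) x x')
    (hfrom : Relation.ReflTransGen (A · · < δ) x' x) : mlc A < δ := by
  obtain ⟨l, hl, hlast⟩ := List.exists_isChain_cons_of_relationReflTransGen hto
  obtain ⟨l', hl', hlast'⟩ := List.exists_isChain_cons_of_relationReflTransGen hfrom
  have hl'_ne : l' ≠ [] := by
    rintro rfl
    exact hne hlast'.symm
  have hmem : x' ∈ l := by
    have := List.getLast_mem (List.cons_ne_nil x l)
    rw [hlast] at this
    exact (List.mem_cons.1 this).resolve_left hne.symm
  have hloop : (x :: (l ++ l')).IsChain (A · · < δ) := by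
    have hsplit : (x :: l).dropLast ++ [x'] = x :: l := by
      rw [← hlast, List.dropLast_append_getLast]
    have h := List.IsChain.append_overlap (hsplit.symm ▸ hl) hl' (List.cons_ne_nil x' [])
    rwa [hsplit] at h
  have hclosed : (x :: (l ++ l')).getLast (List.cons_ne_nil x _) = x := by
    rw [List.getLast_cons hl'_ne] at hlast'
    rw [List.getLast_cons (List.append_ne_nil_of_right_ne_nil l hl'_ne),
      List.getLast_append_of_ne_nil _ hl'_ne, hlast']
  exact (mlc_le_chainCost hclosed (List.mem_append_left l' hmem) hne.symm).trans_lt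
    ((chainCost_lt_iff hδ).2 hloop)

end Chains

theorem IsDissim.pos {X : Type} {A : X → X → ℝ} (hA : IsDissim A) {x x' : X} (hne : x ≠ x') :
    0 < A x x' :=
  (hA.1 x x').lt_of_ne' (mt (hA.2 x x').1 hne)

section Separation

variable {X : Type} [Finite X] {A : X → X → ℝ}

theorem finite_offDiag_values (A : X → X → ℝ) : {c | ∃ x x', x ≠ x' ∧ A x x' = c}.Finite :=
  (Set.finite_range A.uncurry).subset fun _ ⟨x, x', _, h⟩ => ⟨(x, x'), h⟩

theorem sep_le {x x' : X} (hne : x ≠ x') : sep A ≤ A x x' :=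
  csInf_le (finite_offDiag_values A).bddBelow ⟨x, x', hne, rfl⟩

theorem IsDissim.sep_pos [Nontrivial X] (hA : IsDissim A) : 0 < sep A := by
  obtain ⟨p, q, hpq⟩ := exists_pair_ne X
  obtain ⟨x, x', hne, hsep⟩ : sep A ∈ {c | ∃ x x', x ≠ x' ∧ A x x' = c} :=
    Set.Nonempty.csInf_mem ⟨A p q, p, q, hpq, rfl⟩ (finite_offDiag_values A)
  exact hsep ▸ hA.pos hne

theorem sep_le_chainCost {x y : X} {l : List X} (hy : y ∈ l) (hyx : y ≠ x) :
    sep A ≤ chainCost A x l := by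
  by_contra! hlt
  have hconst : (x :: l).IsChain (· = ·) :=
    ((chainCost_lt_iff ((chainCost_nonneg A x l).trans_lt hlt)).1 hlt).imp
      fun _ _ huv => not_imp_comm.1 sep_le huv.not_ge
  exact hyx (List.rel_of_pairwise_cons hconst.pairwise hy).symm

theorem sep_le_mlc [Nontrivial X] (A : X → X → ℝ) : sep A ≤ mlc A := by
  obtain ⟨p, q, hpq⟩ := exists_pair_ne X
  refine le_csInf ⟨_, p, [q, p], rfl, ⟨q, List.mem_cons_self, hpq.symm⟩, rfl⟩ ?_
  rintro _ ⟨x, l, -, ⟨y, hy, hyx⟩, rfl⟩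
  exact sep_le_chainCost hy hyx

end Separation

theorem isDissim_canonDissim (n : ℕ) {α β : ℝ} (hα : 0 < α) (hβ : 0 < β) :
    IsDissim (canonDissim n α β) := by
  constructor <;> intro i j <;> unfold canonDissim <;> split_ifs <;> simp [*, le_of_lt, ne_of_gt]

section Methods

variable {H : HCMethod}

theorem AxiomValue.canonDissim_two (hA1 : AxiomValue H) {α β : ℝ} (hα : 0 < α) (hβ : 0 < β) :
    H (Fin 2) (canonDissim 2 α β) 0 1 = max α β ∧
      H (Fin 2) (canonDissim 2 α β) 1 0 = max α β := by
  have hdissim := isDissim_canonDissim 2 hα hβ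
  have h01 : TwoNode (0 : Fin 2) 1 := by unfold TwoNode; decide
  have h10 : TwoNode (1 : Fin 2) 0 := by unfold TwoNode; decide
  rw [hA1 _ _ _ h01 _ hdissim, hA1 _ _ _ h10 _ hdissim]
  simp [canonDissim, max_comm]

variable {X : Type} [Fintype X] {A : X → X → ℝ} {δ : ℝ} {x x' : X}

theorem le_method_of_cut (hA1 : AxiomValue H) (hA2 : AxiomTransform H) (hA : IsDissim A)
    (hδ : 0 < δ) {S : Set X} (hS : ∀ y ∉ S, ∀ z ∈ S, δ ≤ A y z) (hx : x ∈ S) (hx' : x' ∉ S) :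
    δ ≤ H X A x x' ∧ δ ≤ H X A x' x := by
  classical
  have : Nontrivial X := ⟨x, x', fun h => hx' (h ▸ hx)⟩
  let φ : X → Fin 2 := fun y => if y ∈ S then 0 else 1
  have hφ : ∀ y z, canonDissim 2 δ (sep A) (φ y) (φ z) ≤ A y z := by
    intro y z
    by_cases hy : y ∈ S <;> by_cases hz : z ∈ S
    · simpa [φ, hy, hz, canonDissim] using hA.1 y z
    · simpa [φ, hy, hz, canonDissim] using sep_le (A := A) (ne_of_mem_of_not_mem hy hz)
    · simpa [φ, hy, hz, canonDissim] using hS y hy z hz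
    · simpa [φ, hy, hz, canonDissim] using hA.1 y z
  have hle := hA2 X (Fin 2) A _ hA (isDissim_canonDissim 2 hδ hA.sep_pos) φ hφ
  have hφx : φ x = 0 := if_pos hx
  have hφx' : φ x' = 1 := if_neg hx'
  obtain ⟨h01, h10⟩ := hA1.canonDissim_two hδ hA.sep_pos
  refine ⟨(le_max_left δ (sep A)).trans ?_, (le_max_left δ (sep A)).trans ?_⟩
  · simpa only [hφx, hφx', h01] using hle x x'
  · simpa only [hφx, hφx', h10] using hle x' x

theorem le_method_of_not_reflTransGen (hA1 : AxiomValue H) (hA2 : AxiomTransform H)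
    (hA : IsDissim A) (hδ : 0 < δ) (h : ¬ Relation.ReflTransGen (A · · < δ) x' x) :
    δ ≤ H X A x x' ∧ δ ≤ H X A x' x := by
  refine le_method_of_cut hA1 hA2 hA hδ (S := {y | Relation.ReflTransGen (A · · < δ) y x})
    (fun y hy z hz => ?_) .refl h
  by_contra! hlt
  exact hy (.head hlt hz)

end Methods

theorem property_of_influence_general
    (H : HCMethod) (hA1 : AxiomValue H) (hA2 : AxiomTransform H)
    (X : Type) [Fintype X] (A : X → X → ℝ) (hA : IsDissim A)
    (x x' : X) (hxx : x ≠ x') :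
    mlc A ≤ H X A x x' := by
  have : Nontrivial X := ⟨x, x', hxx⟩
  have hpos : 0 < mlc A := hA.sep_pos.trans_le (sep_le_mlc A)
  by_cases hback : Relation.ReflTransGen (A · · < mlc A) x' x
  · have hforth : ¬ Relation.ReflTransGen (A · · < mlc A) x x' := fun hforth =>
      (mlc_lt_of_reflTransGen hpos hxx hforth hback).false
    exact (le_method_of_not_reflTransGen hA1 hA2 hA hpos hforth).2
  · exact (le_method_of_not_reflTransGen hA1 hA2 hA hpos hback).1

/-- Admissible methods satisfy the Property of Influence (P1). -/
theorem property_of_influence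
    (H : HCMethod) (hH : IsHCMethod H) (hA1 : AxiomValue H) (hA2 : AxiomTransform H)
    (X : Type) [Fintype X] (A : X → X → ℝ) (hA : IsDissim A)
    (x x' : X) (hxx : x ≠ x') :
    mlc A ≤ H X A x x' :=
  property_of_influence_general H hA1 hA2 X A hA x x' hxx
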